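/- Let Ω ⊂ ℝⁿ be open and assume φ ∈ Φ_w(Ω) satisfies (A0) and (aDec)_q for some q < ∞. If |Ω| < ∞, then C^∞_{0,0}(Ω) := {f ∈ C_c^∞(Ω) : ∫_Ω f dx = 0} is dense in L^φ_0(Ω) := {f ∈ L^φ(Ω) : ∫_Ω f dx = 0}. If |Ω| = ∞ and φ additionally satisfies (aInc)_p for some p > 1, then C^∞_{0,0}(Ω) is dense in L^φ(Ω). -/

import Mathlib

open MeasureTheory NNReal ENNReal Filter Set

noncomputable section

/-- `ℝⁿ` with the Euclidean structure. -/
abbrev RSp (n : ℕ) := EuclideanSpace ℝ (Fin n)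

variable {n : ℕ}

/-- A cube in `ℝⁿ` with sides parallel to the coordinate axes,
with center `c` and side length `2r`. -/
structure Cube (n : ℕ) where
  c : RSp n
  r : ℝ
  r_pos : 0 < r

/-- The underlying set of a cube. -/
def Cube.set (Q : Cube n) : Set (RSp n) := {y | ∀ i, |y i - Q.c i| ≤ Q.r}

/-- A weak Φ-function on `Ω` (the class `Φ_w(Ω)`). -/
structure IsWeakPhi (Ω : Set (RSp n)) (φ : RSp n → ℝ≥0 → ℝ≥0∞) : Prop where
  meas : ∀ f : RSp n → ℝ≥0, Measurable f →
    AEMeasurable (fun x => φ x (f x)) (volume.restrict Ω)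
  mono : ∀ x ∈ Ω, Monotone (φ x)
  zero : ∀ x ∈ Ω, φ x 0 = 0
  lim_zero : ∀ x ∈ Ω, Tendsto (fun t : ℝ≥0 => φ x t) (nhdsWithin 0 (Set.Ioi 0)) (nhds 0)
  lim_top : ∀ x ∈ Ω, Tendsto (fun t : ℝ≥0 => φ x t) atTop (nhds ∞)
  almost_inc : ∃ L : ℝ≥0, 1 ≤ L ∧ ∀ x ∈ Ω, ∀ s t : ℝ≥0, 0 < s → s < t →
    φ x s / (s : ℝ≥0∞) ≤ (L : ℝ≥0∞) * (φ x t / (t : ℝ≥0∞))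

/-- A convex Φ-function on `Ω` (the class `Φ_c(Ω)`): a weak Φ-function which is
additionally convex and left-continuous in `t` for a.e. `x ∈ Ω`. -/
structure IsConvexPhi (Ω : Set (RSp n)) (φ : RSp n → ℝ≥0 → ℝ≥0∞)
    extends IsWeakPhi Ω φ : Prop where
  convex : ∀ᵐ x ∂(volume.restrict Ω), ∀ s t a b : ℝ≥0, a + b = 1 →
    φ x (a * s + b * t) ≤ (a : ℝ≥0∞) * φ x s + (b : ℝ≥0∞) * φ x t
  left_cont : ∀ᵐ x ∂(volume.restrict Ω), ∀ t : ℝ≥0,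
    Tendsto (φ x) (nhdsWithin t (Set.Iio t)) (nhds (φ x t))

/-- A strong Φ-function on `Ω` (the class `Φ_s(Ω)`): a weak Φ-function which is
additionally convex and continuous into `[0,∞]` for a.e. `x ∈ Ω`. -/
structure IsStrongPhi (Ω : Set (RSp n)) (φ : RSp n → ℝ≥0 → ℝ≥0∞)
    extends IsWeakPhi Ω φ : Prop where
  convex : ∀ᵐ x ∂(volume.restrict Ω), ∀ s t a b : ℝ≥0, a + b = 1 →
    φ x (a * s + b * t) ≤ (a : ℝ≥0∞) * φ x s + (b : ℝ≥0∞) * φ x t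
  cont : ∀ᵐ x ∂(volume.restrict Ω), Continuous (φ x)

/-- The generalized (left-)inverse `φ⁻¹(x,t) = inf {τ ≥ 0 : φ(x,τ) ≥ t}`. -/
def phiInv (φ : RSp n → ℝ≥0 → ℝ≥0∞) (x : RSp n) (t : ℝ≥0∞) : ℝ≥0∞ :=
  sInf ((fun s : ℝ≥0 => (s : ℝ≥0∞)) '' {s : ℝ≥0 | t ≤ φ x s})

/-- The condition `(aInc)_p` on `Ω`: `t ↦ φ(x,t)/t^p` is almost increasing, uniformly in `x`. -/
def AInc (p : ℝ) (Ω : Set (RSp n)) (φ : RSp n → ℝ≥0 → ℝ≥0∞) : Prop :=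
  ∃ L : ℝ≥0, 1 ≤ L ∧ ∀ x ∈ Ω, ∀ s t : ℝ≥0, 0 < s → s < t →
    φ x s / (s : ℝ≥0∞) ^ p ≤ (L : ℝ≥0∞) * (φ x t / (t : ℝ≥0∞) ^ p)

/-- The condition `(aDec)_q` on `Ω`: `t ↦ φ(x,t)/t^q` is almost decreasing, uniformly in `x`. -/
def ADec (q : ℝ) (Ω : Set (RSp n)) (φ : RSp n → ℝ≥0 → ℝ≥0∞) : Prop :=
  ∃ L : ℝ≥0, 1 ≤ L ∧ ∀ x ∈ Ω, ∀ s t : ℝ≥0, 0 < s → s < t →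
    φ x t / (t : ℝ≥0∞) ^ q ≤ (L : ℝ≥0∞) * (φ x s / (s : ℝ≥0∞) ^ q)

/-- The condition `(A0)` on `Ω`: `β ≤ φ⁻¹(x,1) ≤ 1/β` for a.e. `x ∈ Ω`. -/
def A0 (Ω : Set (RSp n)) (φ : RSp n → ℝ≥0 → ℝ≥0∞) : Prop :=
  ∃ β : ℝ≥0, 0 < β ∧ β ≤ 1 ∧ ∀ᵐ x ∂(volume.restrict Ω),
    (β : ℝ≥0∞) ≤ phiInv φ x 1 ∧ phiInv φ x 1 ≤ (β : ℝ≥0∞)⁻¹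

/-- The condition `(A1)` (on all of `ℝⁿ`). -/
def A1 (φ : RSp n → ℝ≥0 → ℝ≥0∞) : Prop :=
  ∃ β : ℝ≥0, 0 < β ∧ β < 1 ∧ ∀ Q : Cube n, volume Q.set ≤ 1 →
    ∀ᵐ x ∂(volume.restrict Q.set), ∀ᵐ y ∂(volume.restrict Q.set),
      ∀ t : ℝ≥0∞, 1 ≤ t → t ≤ (volume Q.set)⁻¹ →
        (β : ℝ≥0∞) * phiInv φ x t ≤ phiInv φ y t

/-- The condition `(A2)` (on all of `ℝⁿ`). -/
def A2 (φ : RSp n → ℝ≥0 → ℝ≥0∞) : Prop :=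
  ∃ φi : ℝ≥0 → ℝ≥0∞, IsWeakPhi Set.univ (fun _ : RSp n => φi) ∧
  ∃ h : RSp n → ℝ≥0∞, (∫⁻ x, h x) < ∞ ∧ (∃ M : ℝ≥0, ∀ᵐ x ∂(volume : Measure (RSp n)), h x ≤ M) ∧
  ∃ β : ℝ≥0, 0 < β ∧ β ≤ 1 ∧ ∃ s : ℝ≥0, 0 < s ∧
    ∀ᵐ x ∂(volume : Measure (RSp n)), ∀ t : ℝ≥0,
      (φi t ≤ (s : ℝ≥0∞) → φ x (β * t) ≤ φi t + h x) ∧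
      (φ x t ≤ (s : ℝ≥0∞) → φi (β * t) ≤ φ x t + h x)

/-- Membership in the generalized Orlicz space `L^φ(Ω)`. -/
def MemOrlicz (φ : RSp n → ℝ≥0 → ℝ≥0∞) (Ω : Set (RSp n)) (f : RSp n → ℝ) : Prop :=
  AEMeasurable f (volume.restrict Ω) ∧
  ∃ lam : ℝ≥0, 0 < lam ∧ (∫⁻ x in Ω, φ x (lam * ‖f x‖₊) ∂volume) < ∞

/-- The Luxemburg (quasi)norm of `L^φ(Ω)`. -/
def orliczNorm (φ : RSp n → ℝ≥0 → ℝ≥0∞) (Ω : Set (RSp n)) (f : RSp n → ℝ) : ℝ≥0∞ :=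
  sInf ((fun lam : ℝ≥0 => (lam : ℝ≥0∞)) ''
    {lam : ℝ≥0 | 0 < lam ∧ (∫⁻ x in Ω, φ x (‖f x‖₊ / lam) ∂volume) ≤ 1})

/-- The canonical extension of `φ(x,·)` to `[0,∞]`. -/
def phiE (φ : RSp n → ℝ≥0 → ℝ≥0∞) (x : RSp n) (t : ℝ≥0∞) : ℝ≥0∞ :=
  ⨆ (s : ℝ≥0) (_ : (s : ℝ≥0∞) ≤ t), φ x s

/-- The Luxemburg (quasi)norm for `[0,∞]`-valued functions. -/
def orliczNormE (φ : RSp n → ℝ≥0 → ℝ≥0∞) (Ω : Set (RSp n)) (g : RSp n → ℝ≥0∞) : ℝ≥0∞ :=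
  sInf ((fun lam : ℝ≥0 => (lam : ℝ≥0∞)) ''
    {lam : ℝ≥0 | 0 < lam ∧ (∫⁻ x in Ω, phiE φ x (g x / (lam : ℝ≥0∞)) ∂volume) ≤ 1})

/-- The average `b_Q` of `b` over the cube `Q`. -/
def cubeAvg (Q : Cube n) (b : RSp n → ℝ) : ℝ := ⨍ x in Q.set, b x

/-- The BMO seminorm `‖b‖_*`. -/
def bmoNorm (b : RSp n → ℝ) : ℝ≥0∞ :=
  ⨆ Q : Cube n, (volume Q.set)⁻¹ * ∫⁻ x in Q.set, ‖b x - cubeAvg Q b‖₊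

/-- `b ∈ BMO(ℝⁿ)`. -/
def IsBMO (b : RSp n → ℝ) : Prop := LocallyIntegrable b volume ∧ bmoNorm b < ∞

/-- The non-centred Hardy–Littlewood maximal function (over axes-parallel cubes). -/
def maximal (f : RSp n → ℝ) (x : RSp n) : ℝ≥0∞ :=
  ⨆ (Q : Cube n) (_ : x ∈ Q.set), (volume Q.set)⁻¹ * ∫⁻ y in Q.set, (‖f y‖₊ : ℝ≥0∞) ∂volume

/-- The fractional maximal function `M_α`. -/
def fracMaximal (α : ℝ) (f : RSp n → ℝ) (x : RSp n) : ℝ≥0∞ :=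
  ⨆ (Q : Cube n) (_ : x ∈ Q.set),
    volume Q.set ^ (α / (n : ℝ) - 1) * ∫⁻ y in Q.set, (‖f y‖₊ : ℝ≥0∞) ∂volume

/-- The maximal function restricted to subcubes of `Q₀`. -/
def restMaximal (Q₀ : Cube n) (f : RSp n → ℝ) (x : RSp n) : ℝ≥0∞ :=
  ⨆ (Q : Cube n) (_ : x ∈ Q.set) (_ : Q.set ⊆ Q₀.set),
    (volume Q.set)⁻¹ * ∫⁻ y in Q.set, (‖f y‖₊ : ℝ≥0∞) ∂volume

/-- The fractional maximal function restricted to subcubes of `Q₀`. -/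
def restFracMaximal (α : ℝ) (Q₀ : Cube n) (f : RSp n → ℝ) (x : RSp n) : ℝ≥0∞ :=
  ⨆ (Q : Cube n) (_ : x ∈ Q.set) (_ : Q.set ⊆ Q₀.set),
    volume Q.set ^ (α / (n : ℝ) - 1) * ∫⁻ y in Q.set, (‖f y‖₊ : ℝ≥0∞) ∂volume

/-- The sharp maximal function `M♯`. -/
def sharpMaximal (f : RSp n → ℝ) (x : RSp n) : ℝ≥0∞ :=
  ⨆ (Q : Cube n) (_ : x ∈ Q.set),
    (volume Q.set)⁻¹ * ∫⁻ y in Q.set, (‖f y - ⨍ z in Q.set, f z‖₊ : ℝ≥0∞) ∂volume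

/-- The maximal commutator `M_b`. -/
def maximalComm (b f : RSp n → ℝ) (x : RSp n) : ℝ≥0∞ :=
  ⨆ (Q : Cube n) (_ : x ∈ Q.set),
    (volume Q.set)⁻¹ * ∫⁻ y in Q.set, (‖b x - b y‖₊ : ℝ≥0∞) * (‖f y‖₊ : ℝ≥0∞) ∂volume

/-- The fractional maximal commutator `M_{b,α}`. -/
def fracMaximalComm (α : ℝ) (b f : RSp n → ℝ) (x : RSp n) : ℝ≥0∞ :=
  ⨆ (Q : Cube n) (_ : x ∈ Q.set),
    volume Q.set ^ (α / (n : ℝ) - 1) *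
      ∫⁻ y in Q.set, (‖b x - b y‖₊ : ℝ≥0∞) * (‖f y‖₊ : ℝ≥0∞) ∂volume

/-- The commutator `[M,b]f = M(bf) − b·Mf` of the maximal operator. -/
def maximalCommutator (b f : RSp n → ℝ) (x : RSp n) : ℝ :=
  (maximal (fun y => b y * f y) x).toReal - b x * (maximal f x).toReal

/-- The commutator `[M_α,b]f = M_α(bf) − b·M_α f` of the fractional maximal operator. -/
def fracMaximalCommutator (α : ℝ) (b f : RSp n → ℝ) (x : RSp n) : ℝ :=
  (fracMaximal α (fun y => b y * f y) x).toReal - b x * (fracMaximal α f x).toReal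

/-- The Riesz potential `I_α f`. -/
def riesz (α : ℝ) (f : RSp n → ℝ) (x : RSp n) : ℝ :=
  ∫ y, f y / dist x y ^ ((n : ℝ) - α)

/-- The commutator `[I_α, b]f = I_α(bf) − b·I_α f` of the Riesz potential. -/
def rieszCommutator (α : ℝ) (b f : RSp n → ℝ) (x : RSp n) : ℝ :=
  riesz α (fun y => b y * f y) x - b x * riesz α f x

/-- The operator `I_{b,α} f(x) = ∫ |b(x)−b(y)|·|x−y|^{α−n} f(y) dy`. -/
def rieszAbs (α : ℝ) (b f : RSp n → ℝ) (x : RSp n) : ℝ :=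
  ∫ y, |b x - b y| / dist x y ^ ((n : ℝ) - α) * f y

/-- Equivalence `φ ≃ ψ` of Φ-functions. -/
def PhiEquiv (φ ψ : RSp n → ℝ≥0 → ℝ≥0∞) : Prop :=
  ∃ L : ℝ≥0, 1 ≤ L ∧ ∀ x : RSp n, ∀ t : ℝ≥0, ψ x (t / L) ≤ φ x t ∧ φ x t ≤ ψ x (L * t)

/-- Weak equivalence `φ ∼ ψ` of Φ-functions. -/
def PhiWeakEquiv (φ ψ : RSp n → ℝ≥0 → ℝ≥0∞) : Prop :=
  ∃ L : ℝ≥0, 1 ≤ L ∧ ∃ h : RSp n → ℝ≥0∞, (∫⁻ x, h x) < ∞ ∧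
    ∀ᵐ x ∂(volume : Measure (RSp n)), ∀ t : ℝ≥0,
      ψ x t ≤ φ x (L * t) + h x ∧ φ x t ≤ ψ x (L * t) + h x

/-- The relation `φ⁻¹(x,t) ≈ t^{α/n}·ψ⁻¹(x,t)` with constants independent of `x` and `t > 0`. -/
def FracInvRel (α : ℝ) (φ ψ : RSp n → ℝ≥0 → ℝ≥0∞) : Prop :=
  ∃ c₁ c₂ : ℝ≥0, 0 < c₁ ∧ ∀ x : RSp n, ∀ t : ℝ≥0, 0 < t →
    (c₁ : ℝ≥0∞) * ((t : ℝ≥0∞) ^ (α / (n : ℝ)) * phiInv ψ x t) ≤ phiInv φ x t ∧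
    phiInv φ x t ≤ (c₂ : ℝ≥0∞) * ((t : ℝ≥0∞) ^ (α / (n : ℝ)) * phiInv ψ x t)

/-- The characteristic function of a cube, as a real-valued function. -/
def cubeIndicator (Q : Cube n) : RSp n → ℝ := Q.set.indicator 1

end

/-- Smooth compactly supported functions on `Ω`. -/
def SmoothCompactSupp {n : ℕ} (Ω : Set (RSp n)) (g : RSp n → ℝ) : Prop :=
  ContDiff ℝ (⊤ : ℕ∞) g ∧ HasCompactSupport g ∧ tsupport g ⊆ Ω


structure GoodPhi {n : ℕ} (Ω : Set (RSp n)) (ψ : RSp n → ℝ≥0 → ℝ≥0∞) : Prop where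
  meas : ∀ f : RSp n → ℝ≥0, Measurable f →
    AEMeasurable (fun x => ψ x (f x)) (volume.restrict Ω)
  mono : ∀ x ∈ Ω, Monotone (ψ x)
  zero : ∀ x ∈ Ω, ψ x 0 = 0
  lim : ∀ x ∈ Ω, Tendsto (ψ x) (nhds 0) (nhds 0)
  bdd : ∀ M : ℝ≥0, ∃ C : ℝ≥0, ∀ᵐ x ∂(volume.restrict Ω), ψ x M ≤ C

def ModApprox {n : ℕ} (Ω : Set (RSp n)) (ψ : RSp n → ℝ≥0 → ℝ≥0∞) (h : RSp n → ℝ) : Prop :=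
  ∀ lam : ℝ≥0, ∀ δ : ℝ≥0∞, 0 < δ → ∃ g, SmoothCompactSupp Ω g ∧
    ∫⁻ x in Ω, ψ x (lam * ‖h x - g x‖₊) ≤ δ

theorem exists_bump {n : ℕ} {Ω K : Set (RSp n)} (hΩ : IsOpen Ω) (hK : IsCompact K) (hKΩ : K ⊆ Ω) :
    ∃ χ : RSp n → ℝ, SmoothCompactSupp Ω χ ∧ (∀ x, χ x ∈ Icc (0:ℝ) 1) ∧ ∀ x ∈ K, χ x = 1 := by
  obtain ⟨K', hK', h1, h2⟩ := exists_compact_between hK hΩ hKΩ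
  obtain ⟨f, hf, hr, h0, hone⟩ := exists_contMDiff_zero_iff_one_iff_of_isClosed
    (modelWithCornersSelf ℝ (RSp n)) (n := ⊤) (s := (interior K')ᶜ) (t := K)
    isOpen_interior.isClosed_compl hK.isClosed
    (Set.disjoint_left.2 fun x hx hxK => hx (h1 hxK))
  have hs : tsupport f ⊆ K' := by
    apply closure_minimal _ hK'.isClosed
    intro x hx
    by_contra hxK
    exact hx ((h0 x).1 fun h => hxK (interior_subset h))
  refine ⟨f, ⟨contMDiff_iff_contDiff.1 hf, ?_, hs.trans h2⟩, fun x => hr ⟨x, rfl⟩,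
    fun x hx => (hone x).1 hx⟩
  exact hK'.of_isClosed_subset (isClosed_tsupport f) hs

theorem SmoothCompactSupp.add' {n : ℕ} {Ω : Set (RSp n)} {f g : RSp n → ℝ}
    (hf : SmoothCompactSupp Ω f) (hg : SmoothCompactSupp Ω g) :
    SmoothCompactSupp Ω (fun x => f x + g x) :=
  ⟨hf.1.add hg.1, hf.2.1.add hg.2.1,
    (tsupport_add f g).trans (union_subset hf.2.2 hg.2.2)⟩

theorem SmoothCompactSupp.smul' {n : ℕ} {Ω : Set (RSp n)} {f : RSp n → ℝ} (c : ℝ)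
    (hf : SmoothCompactSupp Ω f) :
    SmoothCompactSupp Ω (fun x => c * f x) := by
  refine ⟨contDiff_const.mul hf.1, hf.2.1.mul_left, ?_⟩
  exact (tsupport_mul_subset_right (f := fun _ => c) (g := f)).trans hf.2.2

theorem SmoothCompactSupp.integrable' {n : ℕ} {Ω : Set (RSp n)} {f : RSp n → ℝ}
    (hf : SmoothCompactSupp Ω f) : Integrable f volume :=
  hf.1.continuous.integrable_of_hasCompactSupport hf.2.1

theorem smoothCompactSupp_zero {n : ℕ} {Ω : Set (RSp n)} :
    SmoothCompactSupp Ω (fun _ => 0) :=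
  ⟨contDiff_const, HasCompactSupport.zero, by simp [tsupport, Function.support]⟩

theorem GoodPhi.mod_add {n : ℕ} {Ω : Set (RSp n)} (hΩ : IsOpen Ω) {ψ : RSp n → ℝ≥0 → ℝ≥0∞}
    (hψ : GoodPhi Ω ψ) {a b c : RSp n → ℝ≥0} (ha : Measurable a)
    (habc : ∀ x, c x ≤ a x + b x) (lam : ℝ≥0) :
    ∫⁻ x in Ω, ψ x (lam * c x) ≤
      (∫⁻ x in Ω, ψ x ((2 * lam) * a x)) + ∫⁻ x in Ω, ψ x ((2 * lam) * b x) := by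
  rw [← lintegral_add_left' (hψ.meas _ (ha.const_mul _))]
  apply setLIntegral_mono' hΩ.measurableSet
  intro x hx
  rcases le_total (a x) (b x) with h | h
  · refine le_add_left (hψ.mono x hx ?_)
    calc lam * c x ≤ lam * (a x + b x) := by gcongr; exact habc x
      _ ≤ lam * (b x + b x) := by gcongr
      _ = _ := by ring
  · refine le_add_right (hψ.mono x hx ?_)
    calc lam * c x ≤ lam * (a x + b x) := by gcongr; exact habc x
      _ ≤ lam * (a x + a x) := by gcongr
      _ = _ := by ring

theorem ModApprox.add {n : ℕ} {Ω : Set (RSp n)} (hΩ : IsOpen Ω) {ψ : RSp n → ℝ≥0 → ℝ≥0∞}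
    (hψ : GoodPhi Ω ψ) {f g : RSp n → ℝ} (hfm : Measurable f) (hf : ModApprox Ω ψ f)
    (hg : ModApprox Ω ψ g) : ModApprox Ω ψ (fun x => f x + g x) := by
  intro lam δ hδ
  obtain ⟨u, hu, hu'⟩ := hf (2 * lam) (δ / 2) (ENNReal.half_pos hδ.ne')
  obtain ⟨v, hv, hv'⟩ := hg (2 * lam) (δ / 2) (ENNReal.half_pos hδ.ne')
  refine ⟨_, hu.add' hv, ?_⟩
  refine (hψ.mod_add hΩ (a := fun x => ‖f x - u x‖₊) (b := fun x => ‖g x - v x‖₊)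
    (hfm.sub hu.1.continuous.measurable).nnnorm (fun x => ?_) lam).trans
    ((add_le_add hu' hv').trans (ENNReal.add_halves δ).le)
  rw [add_sub_add_comm]; exact nnnorm_add_le _ _

theorem ModApprox.of_lim {n : ℕ} {Ω : Set (RSp n)} (hΩ : IsOpen Ω) {ψ : RSp n → ℝ≥0 → ℝ≥0∞}
    (hψ : GoodPhi Ω ψ) {f : RSp n → ℝ} (hfm : Measurable f)
    (h : ∀ lam : ℝ≥0, ∀ δ : ℝ≥0∞, 0 < δ → ∃ g, Measurable g ∧ ModApprox Ω ψ g ∧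
    ∫⁻ x in Ω, ψ x (lam * ‖f x - g x‖₊) ≤ δ) : ModApprox Ω ψ f := by
  intro lam δ hδ
  obtain ⟨u, hu, hua, hu'⟩ := h (2 * lam) (δ / 2) (ENNReal.half_pos hδ.ne')
  obtain ⟨v, hv, hv'⟩ := hua (2 * lam) (δ / 2) (ENNReal.half_pos hδ.ne')
  refine ⟨_, hv, ?_⟩
  refine (hψ.mod_add hΩ (a := fun x => ‖f x - u x‖₊) (b := fun x => ‖u x - v x‖₊)
    (hfm.sub hu).nnnorm (fun x => ?_) lam).trans
    ((add_le_add hu' hv').trans (ENNReal.add_halves δ).le)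
  rw [← sub_add_sub_cancel (f x) (u x)]; exact nnnorm_add_le _ _

theorem modApprox_indicator {n : ℕ} {Ω : Set (RSp n)} (hΩ : IsOpen Ω) {ψ : RSp n → ℝ≥0 → ℝ≥0∞}
    (hψ : GoodPhi Ω ψ) {A : Set (RSp n)} (hA : MeasurableSet A) (hAfin : volume A ≠ ∞) (c : ℝ) :
    ModApprox Ω ψ (A.indicator fun _ => c) := by
  intro lam δ hδ
  obtain ⟨C, hC⟩ := hψ.bdd (lam * ‖c‖₊)
  have hBm : MeasurableSet (A ∩ Ω) := hA.inter hΩ.measurableSet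
  have hBf : volume (A ∩ Ω) ≠ ∞ := ne_top_of_le_ne_top hAfin (measure_mono inter_subset_left)
  have hε : δ / (C + 1) / 2 ≠ 0 := by
    refine (ENNReal.half_pos (ENNReal.div_pos hδ.ne' ?_).ne').ne'
    exact ENNReal.add_ne_top.2 ⟨ENNReal.coe_ne_top, ENNReal.one_ne_top⟩
  obtain ⟨K, hKA, hK, hK'⟩ := hBm.exists_isCompact_sdiff_lt hBf hε
  obtain ⟨U, hAU, hU, -, hU'⟩ := hBm.exists_isOpen_sdiff_lt hBf hε
  obtain ⟨χ, hχ, hχr, hχ1⟩ := exists_bump (hU.inter hΩ) hK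
    (fun x hx => ⟨hAU (hKA hx), (hKA hx).2⟩)
  have hχΩ : SmoothCompactSupp Ω χ := ⟨hχ.1, hχ.2.1, hχ.2.2.trans inter_subset_right⟩
  refine ⟨_, hχΩ.smul' c, ?_⟩
  have hle : ∀ᵐ x ∂(volume.restrict Ω), ψ x (lam * ‖A.indicator (fun _ => c) x - c * χ x‖₊) ≤
      (U \ K).indicator (fun _ => (C : ℝ≥0∞)) x := by
    filter_upwards [hC, ae_restrict_mem hΩ.measurableSet] with x hx hxΩ
    by_cases hxUK : x ∈ U \ K
    · rw [indicator_of_mem hxUK]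
      refine (hψ.mono x hxΩ ?_).trans hx
      gcongr
      by_cases hxA : x ∈ A
      · rw [indicator_of_mem hxA, ← NNReal.coe_le_coe, coe_nnnorm, coe_nnnorm,
          show c - c * χ x = c * (1 - χ x) by ring, norm_mul]
        apply mul_le_of_le_one_right (norm_nonneg _)
        rw [Real.norm_eq_abs, abs_le]
        constructor <;> linarith [(hχr x).1, (hχr x).2]
      · rw [indicator_of_notMem hxA, ← NNReal.coe_le_coe, coe_nnnorm, coe_nnnorm, zero_sub,
          norm_neg, norm_mul]
        apply mul_le_of_le_one_right (norm_nonneg _)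
        rw [Real.norm_eq_abs, abs_le]
        constructor <;> linarith [(hχr x).1, (hχr x).2]
    · rw [indicator_of_notMem hxUK]
      have : A.indicator (fun _ => c) x - c * χ x = 0 := by
        by_cases hxK : x ∈ K
        · rw [indicator_of_mem (hKA hxK).1, hχ1 x hxK]; ring
        · have hxU : x ∉ U := fun h => hxUK ⟨h, hxK⟩
          rw [indicator_of_notMem (fun h => hxU (hAU ⟨h, hxΩ⟩)),
            image_eq_zero_of_notMem_tsupport (f := χ) (fun h => hxU (hχ.2.2 h).1)]; ring
      rw [this]; simp [hψ.zero x hxΩ]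
  calc _ ≤ ∫⁻ x in Ω, (U \ K).indicator (fun _ => (C : ℝ≥0∞)) x := lintegral_mono_ae hle
    _ ≤ ∫⁻ x, (U \ K).indicator (fun _ => (C : ℝ≥0∞)) x := setLIntegral_le_lintegral _ _
    _ = C * volume (U \ K) := by
      rw [lintegral_indicator_const (hU.measurableSet.diff hK.measurableSet)]
    _ ≤ (C + 1) * (δ / (C + 1)) := by
      gcongr
      · exact le_self_add
      · calc volume (U \ K) ≤ volume ((U \ (A ∩ Ω)) ∪ ((A ∩ Ω) \ K)) := by
              apply measure_mono
              intro x hx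
              by_cases h : x ∈ A ∩ Ω
              · exact Or.inr ⟨h, hx.2⟩
              · exact Or.inl ⟨hx.1, h⟩
          _ ≤ _ := measure_union_le _ _
          _ ≤ _ := add_le_add hU'.le hK'.le
          _ = _ := ENNReal.add_halves _
    _ ≤ δ := ENNReal.mul_div_le

theorem modApprox_simple {n : ℕ} {Ω : Set (RSp n)} (hΩ : IsOpen Ω) {ψ : RSp n → ℝ≥0 → ℝ≥0∞}
    (hψ : GoodPhi Ω ψ) {A : Set (RSp n)} (hA : MeasurableSet A) (hAfin : volume A ≠ ∞)
    (s : SimpleFunc (RSp n) ℝ) :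
    ModApprox Ω ψ (A.indicator s) := by
  induction s using SimpleFunc.induction with
  | const c hs =>
    rename_i s
    have := modApprox_indicator hΩ hψ (hA.inter hs)
      (ne_top_of_le_ne_top hAfin (measure_mono inter_subset_left)) c
    convert this using 1
    ext x
    by_cases h1 : x ∈ A <;> by_cases h2 : x ∈ s <;> simp [h1, h2]
  | add _ hf hg =>
    rename_i f g _
    have := hf.add hΩ hψ (f.measurable.indicator hA) hg
    convert this using 1
    ext x
    by_cases h1 : x ∈ A <;> simp [h1]

theorem modApprox_of_mem {n : ℕ} {Ω : Set (RSp n)} (hΩ : IsOpen Ω) {ψ : RSp n → ℝ≥0 → ℝ≥0∞}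
    (hψ : GoodPhi Ω ψ) {f : RSp n → ℝ} (hf : Measurable f)
    (hfi : ∀ lam : ℝ≥0, ∫⁻ x in Ω, ψ x (lam * ‖f x‖₊) ≠ ∞) : ModApprox Ω ψ f := by
  apply ModApprox.of_lim hΩ hψ hf
  intro lam δ hδ
  let s : ℕ → SimpleFunc (RSp n) ℝ := fun k => SimpleFunc.approxOn f hf univ 0 (mem_univ _) k
  let g : ℕ → RSp n → ℝ := fun k => (Metric.ball (0 : RSp n) k).indicator (s k)
  have hgm : ∀ k, Measurable (g k) := fun k => (s k).measurable.indicator measurableSet_ball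
  have hlim : Tendsto (fun k => ∫⁻ x in Ω, ψ x (lam * ‖f x - g k x‖₊)) atTop
      (nhds (∫⁻ x in Ω, 0)) := by
    refine tendsto_lintegral_of_dominated_convergence' (fun x => ψ x (lam * ‖f x‖₊))
      (fun k => hψ.meas _ ((hf.sub (hgm k)).nnnorm.const_mul _)) (fun k => ?_) (hfi lam) ?_
    · filter_upwards [ae_restrict_mem hΩ.measurableSet] with x hx
      apply hψ.mono x hx
      gcongr
      by_cases hxb : x ∈ Metric.ball (0 : RSp n) k
      · have := SimpleFunc.edist_approxOn_le hf (mem_univ (0 : ℝ)) x k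
        rw [edist_comm 0, edist_zero_right, edist_comm, edist_eq_enorm_sub] at this
        simp only [g, indicator_of_mem hxb]
        exact ENNReal.coe_le_coe.1 this
      · simp only [g, indicator_of_notMem hxb, sub_zero]; exact le_rfl
    · filter_upwards [ae_restrict_mem hΩ.measurableSet] with x hx
      apply (hψ.lim x hx).comp
      have h1 : Tendsto (fun k => g k x) atTop (nhds (f x)) := by
        refine (SimpleFunc.tendsto_approxOn hf (mem_univ (0 : ℝ)) (x := x) (by simp)).congr' ?_
        obtain ⟨N, hN⟩ := exists_nat_gt ‖x‖
        filter_upwards [eventually_ge_atTop N] with k hk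
        have : x ∈ Metric.ball (0 : RSp n) k := by
          rw [mem_ball_zero_iff]; exact hN.trans_le (by exact_mod_cast hk)
        simp only [g, indicator_of_mem this]; rfl
      have h2 := ((tendsto_const_nhds (x := f x)).sub h1).nnnorm.const_mul lam
      simpa using h2
  simp only [lintegral_zero] at hlim
  obtain ⟨k, hk⟩ := (hlim.eventually (gt_mem_nhds hδ)).exists
  exact ⟨g k, hgm k, modApprox_simple hΩ hψ measurableSet_ball measure_ball_lt_top.ne (s k), hk.le⟩

theorem A0.exists_le_one {n : ℕ} {Ω : Set (RSp n)} {φ : RSp n → ℝ≥0 → ℝ≥0∞} (h : A0 Ω φ) :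
    ∃ b : ℝ≥0, 0 < b ∧ ∀ᵐ x ∂(volume.restrict Ω), φ x b ≤ 1 := by
  obtain ⟨β, hβ, -, h⟩ := h
  refine ⟨β / 2, half_pos hβ, ?_⟩
  filter_upwards [h] with x hx
  by_contra! hlt
  have h1 : phiInv φ x 1 ≤ ((β / 2 : ℝ≥0) : ℝ≥0∞) := sInf_le ⟨β / 2, hlt.le, rfl⟩
  have h2 := ENNReal.coe_le_coe.1 (hx.1.trans h1)
  exact absurd h2 (not_le.2 (NNReal.half_lt_self hβ.ne'))

theorem le_of_div_rpow {a b : ℝ≥0∞} {L : ℝ≥0} {s t : ℝ≥0} {q : ℝ} (hs : 0 < s) 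
    (h : a / (s : ℝ≥0∞) ^ q ≤ L * (b / (t : ℝ≥0∞) ^ q)) :
    a ≤ (L * ((s : ℝ≥0∞) ^ q / (t : ℝ≥0∞) ^ q)) * b := by
  have hs0 : (s : ℝ≥0∞) ^ q ≠ 0 :=
    (ENNReal.rpow_pos (by exact_mod_cast hs) ENNReal.coe_ne_top).ne'
  have hst : (s : ℝ≥0∞) ^ q ≠ ∞ := ENNReal.rpow_ne_top_of_ne_zero (by exact_mod_cast hs.ne') ENNReal.coe_ne_top
  rw [ENNReal.div_le_iff hs0 hst] at h
  refine h.trans (le_of_eq ?_)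
  simp only [div_eq_mul_inv]; ring

theorem coe_rpow_div_ne_top {s t : ℝ≥0} {q : ℝ} (hs : 0 < s) (ht : 0 < t) (L : ℝ≥0) :
    (L : ℝ≥0∞) * ((s : ℝ≥0∞) ^ q / (t : ℝ≥0∞) ^ q) ≠ ∞ := by
  refine ENNReal.mul_ne_top ENNReal.coe_ne_top (ENNReal.div_ne_top ?_ ?_)
  · exact ENNReal.rpow_ne_top_of_ne_zero (by exact_mod_cast hs.ne') ENNReal.coe_ne_top
  · exact (ENNReal.rpow_pos (by exact_mod_cast ht) ENNReal.coe_ne_top).ne'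

theorem goodPhi_of {n : ℕ} {Ω : Set (RSp n)} (hΩ : IsOpen Ω)
    {φ : RSp n → ℝ≥0 → ℝ≥0∞} (hφ : IsWeakPhi Ω φ)
    (ha0 : A0 Ω φ) {q : ℝ} (hdec : ADec q Ω φ) : GoodPhi Ω φ where
  meas := hφ.meas
  mono := hφ.mono
  zero := hφ.zero
  lim x hx := by
    have h := hφ.lim_zero x hx
    have h0 : Tendsto (φ x) (pure 0) (nhds 0) := by
      rw [tendsto_pure_left]
      intro s hs
      rw [hφ.zero x hx]; exact mem_of_mem_nhds hs
    refine (h0.sup h).mono_left ?_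
    have : Set.Ici (0 : ℝ≥0) = insert 0 (Set.Ioi 0) := by
      ext y; simp [pos_iff_ne_zero, em]
    rw [← nhdsWithin_insert, ← this, show Set.Ici (0 : ℝ≥0) = univ from by ext; simp, nhdsWithin_univ]
  bdd M := by
    obtain ⟨b, hb, h⟩ := ha0.exists_le_one
    obtain ⟨L, -, hL⟩ := hdec
    rcases le_or_gt M b with hM | hM
    · refine ⟨1, ?_⟩
      filter_upwards [h, ae_restrict_mem hΩ.measurableSet] with x hx hxΩ
      exact (hφ.mono x hxΩ hM).trans (by simpa using hx)
    · have hfin := coe_rpow_div_ne_top (q := q) (hb.trans hM) hb L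
      refine ⟨ENNReal.toNNReal (L * ((M : ℝ≥0∞) ^ q / (b : ℝ≥0∞) ^ q)), ?_⟩
      · rw [ENNReal.coe_toNNReal hfin]
        filter_upwards [h, ae_restrict_mem hΩ.measurableSet] with x hx hxΩ
        exact (le_of_div_rpow (hb.trans hM) (hL x hxΩ b M hb hM)).trans
          (mul_le_of_le_one_right (zero_le) hx)

theorem modular_ne_top {n : ℕ} {Ω : Set (RSp n)} (hΩ : IsOpen Ω)
    {φ : RSp n → ℝ≥0 → ℝ≥0∞} (hφ : IsWeakPhi Ω φ)
    {q : ℝ} (hdec : ADec q Ω φ) {u : RSp n → ℝ≥0} {l₀ : ℝ≥0} (hl : 0 < l₀)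
    (hu : ∫⁻ x in Ω, φ x (l₀ * u x) < ∞) (l : ℝ≥0) : ∫⁻ x in Ω, φ x (l * u x) ≠ ∞ := by
  obtain ⟨L, -, hL⟩ := hdec
  rcases le_or_gt l l₀ with h | h
  · refine ne_top_of_le_ne_top hu.ne (setLIntegral_mono' hΩ.measurableSet fun x hx => ?_)
    apply hφ.mono x hx
    gcongr
  · have hfin := coe_rpow_div_ne_top (q := q) (hl.trans h) hl L
    refine ne_top_of_le_ne_top (ENNReal.mul_ne_top hfin hu.ne) ?_
    rw [← lintegral_const_mul' _ _ hfin]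
    refine setLIntegral_mono' hΩ.measurableSet fun x hx => ?_
    rcases eq_or_lt_of_le (zero_le (a := u x)) with h0 | h0
    · simp [← h0, hφ.zero x hx]
    have hlu : 0 < l₀ * u x := mul_pos hl h0
    have hlt : l₀ * u x < l * u x := by gcongr
    refine (le_of_div_rpow (hlu.trans hlt) (hL x hx _ _ hlu hlt)).trans (le_of_eq ?_)
    congr 2
    rw [ENNReal.coe_mul, ENNReal.coe_mul, ENNReal.mul_rpow_of_ne_top ENNReal.coe_ne_top ENNReal.coe_ne_top,
      ENNReal.mul_rpow_of_ne_top ENNReal.coe_ne_top ENNReal.coe_ne_top, ENNReal.mul_div_mul_right]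
    · exact (ENNReal.rpow_pos (by exact_mod_cast h0) ENNReal.coe_ne_top).ne'
    · exact ENNReal.rpow_ne_top_of_ne_zero (by exact_mod_cast h0.ne') ENNReal.coe_ne_top

theorem GoodPhi.add_id {n : ℕ} {Ω : Set (RSp n)} {φ : RSp n → ℝ≥0 → ℝ≥0∞} (h : GoodPhi Ω φ) :
    GoodPhi Ω (fun x t => φ x t + t) where
  meas f hf := (h.meas f hf).add hf.coe_nnreal_ennreal.aemeasurable
  mono x hx s t hst := add_le_add (h.mono x hx hst) (by exact_mod_cast hst)
  zero x hx := by simp [h.zero x hx]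
  lim x hx := by
    have := (h.lim x hx).add (ENNReal.continuous_coe.tendsto (0 : ℝ≥0))
    simpa using this
  bdd M := by
    obtain ⟨C, hC⟩ := h.bdd M
    refine ⟨C + M, ?_⟩
    filter_upwards [hC] with x hx
    rw [ENNReal.coe_add]; gcongr

theorem finish {n : ℕ} {Ω : Set (RSp n)} (hΩ : IsOpen Ω)
    {φ : RSp n → ℝ≥0 → ℝ≥0∞} (hφ : GoodPhi Ω φ) {f F g η : RSp n → ℝ} (hF : Measurable F)
    (hfF : f =ᵐ[volume.restrict Ω] F) {ε : ℝ≥0∞} {l : ℝ≥0} (hl : 0 < l) (hlε : l < ε)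
    (hg : SmoothCompactSupp Ω g) (hη : SmoothCompactSupp Ω η) (hη1 : ∫ x in Ω, η x = 1)
    (h1 : ∫⁻ x in Ω, φ x ((2 * l⁻¹) * ‖F x - g x‖₊) ≤ 1 / 2)
    (h2 : ∫⁻ x in Ω, φ x ((2 * l⁻¹ * ‖∫ x in Ω, g x‖₊) * ‖η x‖₊) ≤ 1 / 2) :
    ∃ g : RSp n → ℝ, SmoothCompactSupp Ω g ∧
          (∫ x in Ω, g x) = 0 ∧ orliczNorm φ Ω (fun x => f x - g x) < ε := by
  set m := ∫ x in Ω, g x with hm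
  refine ⟨_, hg.add' (hη.smul' (-m)), ?_, ?_⟩
  · rw [integral_add hg.integrable'.integrableOn (hη.smul' (-m)).integrable'.integrableOn,
      integral_const_mul, hη1, ← hm]; ring
  · refine lt_of_le_of_lt (sInf_le ⟨l, ⟨hl, ?_⟩, rfl⟩) hlε
    calc _ = ∫⁻ x in Ω, φ x (l⁻¹ * ‖F x - (g x + -m * η x)‖₊) := by
          apply lintegral_congr_ae
          filter_upwards [hfF] with x hx
          rw [hx, div_eq_inv_mul]
      _ ≤ _ := hφ.mod_add hΩ (a := fun x => ‖F x - g x‖₊) (b := fun x => ‖m‖₊ * ‖η x‖₊)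
          (hF.sub hg.1.continuous.measurable).nnnorm (fun x => ?_) _
      _ ≤ 1 / 2 + 1 / 2 := add_le_add h1 (by simpa only [mul_assoc] using h2)
      _ = 1 := ENNReal.add_halves 1
    rw [← nnnorm_mul, show F x - (g x + -m * η x) = (F x - g x) + m * η x by ring]
    exact nnnorm_add_le _ _

theorem exists_eta {n : ℕ} {Ω : Set (RSp n)} (hΩ : IsOpen Ω) (N : ℝ≥0) (hN : N < volume Ω) :
    ∃ (χ : RSp n → ℝ) (V : ℝ≥0), SmoothCompactSupp Ω χ ∧ (∀ x, χ x ∈ Icc (0:ℝ) 1) ∧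
      N < V ∧ ∫ x in Ω, χ x = V := by
  obtain ⟨K, hKΩ, hK, hNK⟩ := hΩ.exists_lt_isCompact hN
  obtain ⟨χ, hχ, hr, h1⟩ := exists_bump hΩ hK hKΩ
  have h0 : 0 ≤ ∫ x in Ω, χ x := integral_nonneg fun x => (hr x).1
  refine ⟨χ, Real.toNNReal (∫ x in Ω, χ x), hχ, hr, ?_, (Real.coe_toNNReal _ h0).symm⟩
  rw [← NNReal.coe_lt_coe, Real.coe_toNNReal _ h0]
  have hKt : volume K ≠ ∞ := hK.measure_lt_top.ne
  calc (N : ℝ) < (volume K).toReal := by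
        have := (ENNReal.toReal_lt_toReal ENNReal.coe_ne_top hKt).2 hNK
        simpa using this
    _ = ∫ x in K, (1 : ℝ) := by simp [Measure.real]
    _ = ∫ x in K, χ x := setIntegral_congr_fun hK.measurableSet fun x hx => (h1 x hx).symm
    _ ≤ ∫ x in Ω, χ x := setIntegral_mono_set hχ.integrable'.integrableOn
        (Eventually.of_forall fun x => (hr x).1) (Eventually.of_forall hKΩ)

theorem case_finite {n : ℕ} {Ω : Set (RSp n)} (hΩ : IsOpen Ω)
    {φ : RSp n → ℝ≥0 → ℝ≥0∞} (hφ : IsWeakPhi Ω φ)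
    (ha0 : A0 Ω φ) {q : ℝ} (hdec : ADec q Ω φ) (hvol : volume Ω < ∞)
    {f : RSp n → ℝ} (hf : MemOrlicz φ Ω f) (hfi : IntegrableOn f Ω volume)
    (hf0 : (∫ x in Ω, f x) = 0) {ε : ℝ≥0∞} (hε : 0 < ε) :
    ∃ g : RSp n → ℝ, SmoothCompactSupp Ω g ∧
          (∫ x in Ω, g x) = 0 ∧ orliczNorm φ Ω (fun x => f x - g x) < ε := by
  obtain ⟨l, hl, hlε⟩ := ENNReal.lt_iff_exists_nnreal_btwn.1 hε
  have hl : 0 < l := by exact_mod_cast hl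
  rcases Ω.eq_empty_or_nonempty with rfl | hne
  · refine ⟨_, smoothCompactSupp_zero, by simp, ?_⟩
    exact lt_of_le_of_lt (sInf_le ⟨l, ⟨hl, by simp⟩, rfl⟩) hlε
  have hgood := goodPhi_of hΩ hφ ha0 hdec
  -- the fixed bump
  obtain ⟨χ, V, hχ, hr, hV, hχV⟩ := exists_eta hΩ 0 (by simpa using hΩ.measure_pos volume hne)
  let η : RSp n → ℝ := fun x => (V : ℝ)⁻¹ * χ x
  have hη : SmoothCompactSupp Ω η := hχ.smul' _
  have hη1 : ∫ x in Ω, η x = 1 := by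
    simp only [η]
    rw [integral_const_mul, hχV]
    exact inv_mul_cancel₀ (by exact_mod_cast hV.ne')
  have hηm : Measurable η := hη.1.continuous.measurable
  have hsmall : Tendsto (fun k : ℕ => ∫⁻ x in Ω, φ x ((1 / ((k : ℝ≥0) + 1)) * ‖η x‖₊)) atTop
      (nhds (∫⁻ x in Ω, 0)) := by
    refine tendsto_lintegral_of_dominated_convergence' (fun x => φ x (V⁻¹))
      (fun k => hgood.meas _ (hηm.nnnorm.const_mul _)) (fun k => ?_) ?_ ?_
    · filter_upwards [ae_restrict_mem hΩ.measurableSet] with x hx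
      apply hφ.mono x hx
      have h1 : 1 / ((k : ℝ≥0) + 1) ≤ 1 := by
        rw [div_le_one (by positivity)]; simp
      refine (mul_le_of_le_one_left zero_le h1).trans ?_
      rw [← NNReal.coe_le_coe, coe_nnnorm, norm_mul, Real.norm_of_nonneg (hr x).1,
        Real.norm_of_nonneg (by positivity), NNReal.coe_inv]
      exact mul_le_of_le_one_right (by positivity) (hr x).2
    · obtain ⟨C, hC⟩ := hgood.bdd (V⁻¹)
      refine ne_top_of_le_ne_top ?_ (lintegral_mono_ae hC)
      rw [lintegral_const, Measure.restrict_apply_univ]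
      exact ENNReal.mul_ne_top ENNReal.coe_ne_top hvol.ne
    · filter_upwards [ae_restrict_mem hΩ.measurableSet] with x hx
      apply (hgood.lim x hx).comp
      have : Tendsto (fun k : ℕ => 1 / ((k : ℝ≥0) + 1)) atTop (nhds 0) :=
        tendsto_one_div_add_atTop_nhds_zero_nat
      simpa using this.mul_const ‖η x‖₊
  simp only [lintegral_zero] at hsmall
  obtain ⟨k, hk⟩ := (hsmall.eventually
    (gt_mem_nhds (show (0 : ℝ≥0∞) < 1 / 2 by simp))).exists
  -- approximation in the sum
  obtain ⟨hfm, l₀, hl₀, hmod⟩ := hf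
  let F := hfm.mk f
  have hF : Measurable F := hfm.measurable_mk
  have hfF : f =ᵐ[volume.restrict Ω] F := hfm.ae_eq_mk
  have hFi : IntegrableOn F Ω volume := hfi.congr hfF
  have hF0 : ∫ x in Ω, F x = 0 := by rw [← hf0]; exact (integral_congr_ae hfF).symm
  have hmodF : ∫⁻ x in Ω, φ x (l₀ * ‖F x‖₊) < ∞ := by
    refine lt_of_eq_of_lt (lintegral_congr_ae ?_) hmod
    filter_upwards [hfF] with x hx
    rw [hx]
  have happ := modApprox_of_mem hΩ hgood.add_id hF (fun lam => by
    rw [lintegral_add_left' (hgood.meas _ (hF.nnnorm.const_mul _))]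
    refine ENNReal.add_ne_top.2 ⟨modular_ne_top hΩ hφ hdec hl₀ hmodF lam, ?_⟩
    simp only [ENNReal.coe_mul]
    rw [lintegral_const_mul' _ _ ENNReal.coe_ne_top]
    exact ENNReal.mul_ne_top ENNReal.coe_ne_top hFi.2.ne)
  obtain ⟨g, hg, hgle⟩ := happ (2 * l⁻¹) (min (1 / 2) ((1 / ((k : ℝ≥0) + 1) : ℝ≥0) : ℝ≥0∞))
    (lt_min (by simp) (by
      have : (0 : ℝ≥0) < 1 / ((k : ℝ≥0) + 1) := by positivity
      exact_mod_cast this))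
  have hgm := hg.1.continuous.measurable
  have hmm : Measurable (fun x => 2 * l⁻¹ * ‖F x - g x‖₊) := (hF.sub hgm).nnnorm.const_mul _
  rw [lintegral_add_left' (hgood.meas _ hmm)] at hgle
  refine finish hΩ hgood hF hfF hl hlε hg hη hη1 ?_ ?_
  · exact (le_self_add.trans hgle).trans (min_le_left _ _)
  · refine le_trans (setLIntegral_mono' hΩ.measurableSet fun x hx => hφ.mono x hx ?_) hk.le
    gcongr
    have h1 := (le_add_self.trans hgle).trans (min_le_right _ _)
    simp only [ENNReal.coe_mul] at h1
    rw [lintegral_const_mul' _ _ (ENNReal.mul_ne_top (by simp) (by simp))] at h1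
    have h2 : ∫ x in Ω, g x = - ∫ x in Ω, (F x - g x) := by
      rw [integral_sub hFi hg.integrable'.integrableOn, hF0]; ring
    have h3 : (‖∫ x in Ω, g x‖₊ : ℝ≥0∞) ≤ ∫⁻ x in Ω, (‖F x - g x‖₊ : ℝ≥0∞) := by
      rw [h2, nnnorm_neg]
      exact enorm_integral_le_lintegral_enorm _
    rw [← ENNReal.coe_le_coe, ENNReal.coe_mul, ENNReal.coe_mul]
    exact (by gcongr : _ ≤ _).trans h1

theorem case_infinite {n : ℕ} {Ω : Set (RSp n)} (hΩ : IsOpen Ω)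
    {φ : RSp n → ℝ≥0 → ℝ≥0∞} (hφ : IsWeakPhi Ω φ)
    (ha0 : A0 Ω φ) {q : ℝ} (hdec : ADec q Ω φ) (hvol : volume Ω = ∞)
    {p : ℝ} (hp : 1 < p) (hinc : AInc p Ω φ)
    {f : RSp n → ℝ} (hf : MemOrlicz φ Ω f) {ε : ℝ≥0∞} (hε : 0 < ε) :
    ∃ g : RSp n → ℝ, SmoothCompactSupp Ω g ∧
          (∫ x in Ω, g x) = 0 ∧ orliczNorm φ Ω (fun x => f x - g x) < ε := by
  obtain ⟨l, hl, hlε⟩ := ENNReal.lt_iff_exists_nnreal_btwn.1 hε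
  have hl : 0 < l := by exact_mod_cast hl
  have hgood := goodPhi_of hΩ hφ ha0 hdec
  obtain ⟨hfm, l₀, hl₀, hmod⟩ := hf
  let F := hfm.mk f
  have hF : Measurable F := hfm.measurable_mk
  have hfF : f =ᵐ[volume.restrict Ω] F := hfm.ae_eq_mk
  have hmodF : ∫⁻ x in Ω, φ x (l₀ * ‖F x‖₊) < ∞ := by
    refine lt_of_eq_of_lt (lintegral_congr_ae ?_) hmod
    filter_upwards [hfF] with x hx
    rw [hx]
  obtain ⟨g, hg, hgle⟩ := modApprox_of_mem hΩ hgood hF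
    (modular_ne_top hΩ hφ hdec hl₀ hmodF) (2 * l⁻¹) (1 / 2) (by simp)
  obtain ⟨b, hb, hb1⟩ := ha0.exists_le_one
  obtain ⟨L, -, hL⟩ := hinc
  set s : ℝ≥0 := 2 * l⁻¹ * ‖∫ x in Ω, g x‖₊ with hs
  have hlim : Tendsto (fun k : ℝ≥0 => L * ((s / b) ^ p * k ^ (1 - p))) atTop (nhds 0) := by
    have h1 : Tendsto (fun k : ℝ≥0 => k ^ (1 - p)) atTop (nhds 0) := by
      rw [← NNReal.tendsto_coe]
      have h := (tendsto_rpow_neg_atTop (sub_pos.2 hp)).comp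
        (NNReal.tendsto_coe_atTop.2 (tendsto_id (α := ℝ≥0) (x := atTop)))
      refine h.congr fun k => ?_
      simp [NNReal.coe_rpow]
    simpa using (h1.const_mul ((s / b) ^ p)).const_mul L
  obtain ⟨N, hN⟩ := eventually_atTop.1 ((hlim.eventually
    (gt_mem_nhds (show (0 : ℝ≥0) < 1 / 2 by simp))).and (eventually_gt_atTop (s / b)))
  obtain ⟨χ, V, hχ, hr, hV, hχV⟩ := exists_eta hΩ N (by rw [hvol]; exact ENNReal.coe_lt_top)
  obtain ⟨hV1, hV2⟩ := hN V hV.le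
  have hV0 : 0 < V := lt_of_le_of_lt zero_le hV
  have hη1 : ∫ x in Ω, (V : ℝ)⁻¹ * χ x = 1 := by
    rw [integral_const_mul, hχV]
    exact inv_mul_cancel₀ (by exact_mod_cast hV0.ne')
  refine finish hΩ hgood hF hfF hl hlε hg (hχ.smul' (V : ℝ)⁻¹) hη1 hgle ?_
  rw [← hs]
  have hp0 : 0 ≤ p := by linarith
  have hpt : ∀ᵐ x ∂(volume.restrict Ω), φ x (s * ‖(V : ℝ)⁻¹ * χ x‖₊) ≤
      ((L * (s / b / V) ^ p : ℝ≥0) : ℝ≥0∞) * ‖χ x‖ₑ := by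
    filter_upwards [hb1, ae_restrict_mem hΩ.measurableSet] with x hx hxΩ
    set c := ‖χ x‖₊ with hc
    have hc1 : c ≤ 1 := by
      rw [← NNReal.coe_le_coe, hc, coe_nnnorm, Real.norm_of_nonneg (hr x).1]
      exact (hr x).2
    have ht : s * ‖(V : ℝ)⁻¹ * χ x‖₊ = s / V * c := by
      rw [nnnorm_mul, nnnorm_inv, NNReal.nnnorm_eq, ← hc, div_eq_mul_inv]; ring
    rw [ht]
    rcases eq_or_lt_of_le (zero_le (a := s / V * c)) with h0 | h0
    · rw [← h0, hφ.zero x hxΩ]; exact zero_le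
    have htb : s / V * c < b := by
      refine lt_of_le_of_lt (mul_le_of_le_one_right zero_le hc1) ?_
      rw [div_lt_iff₀ hV0]
      rwa [div_lt_iff₀ hb, mul_comm] at hV2
    refine (le_of_div_rpow h0 (hL x hxΩ _ _ h0 htb)).trans
      ((mul_le_of_le_one_right zero_le hx).trans ?_)
    rw [← ENNReal.div_rpow_of_nonneg _ _ hp0, ← ENNReal.coe_div hb.ne',
      ← ENNReal.coe_rpow_of_nonneg _ hp0, ← ENNReal.coe_mul, enorm_eq_nnnorm, ← hc,
      ← ENNReal.coe_mul, ENNReal.coe_le_coe, mul_assoc]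
    gcongr
    rw [show s / V * c / b = s / b / V * c by ring, NNReal.mul_rpow]
    gcongr
    exact NNReal.rpow_le_self_of_le_one hc1 hp.le
  refine (lintegral_mono_ae hpt).trans ?_
  rw [lintegral_const_mul' _ _ ENNReal.coe_ne_top,
    ← ofReal_integral_norm_eq_lintegral_enorm hχ.integrable'.integrableOn]
  have hnorm : ∫ x in Ω, ‖χ x‖ = V := by
    rw [← hχV]
    exact integral_congr_ae (Eventually.of_forall fun x => Real.norm_of_nonneg (hr x).1)
  rw [hnorm, ENNReal.ofReal_coe_nnreal, ← ENNReal.coe_mul]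
  have hfinal : L * (s / b / V) ^ p * V = L * ((s / b) ^ p * V ^ (1 - p)) := by
    rw [NNReal.div_rpow, NNReal.rpow_sub hV0.ne', NNReal.rpow_one]
    field_simp
  rw [hfinal]
  refine (ENNReal.coe_le_coe.2 hV1.le).trans ?_
  simp

/-- density of mean-zero smooth compactly supported functions:
in `L^φ_0(Ω)` when `|Ω| < ∞`, and in `L^φ(Ω)` when `|Ω| = ∞` and `φ` satisfies
`(aInc)_p` for some `p > 1`. -/
theorem statement7 {n : ℕ} (Ω : Set (RSp n)) (hΩ : IsOpen Ω)
    (φ : RSp n → ℝ≥0 → ℝ≥0∞) (hφ : IsWeakPhi Ω φ)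
    (ha0 : A0 Ω φ) (q : ℝ) (hdec : ADec q Ω φ) :
    (volume Ω < ∞ →
      ∀ f : RSp n → ℝ, MemOrlicz φ Ω f → IntegrableOn f Ω volume →
        (∫ x in Ω, f x) = 0 →
        ∀ ε : ℝ≥0∞, 0 < ε → ∃ g : RSp n → ℝ, SmoothCompactSupp Ω g ∧
          (∫ x in Ω, g x) = 0 ∧ orliczNorm φ Ω (fun x => f x - g x) < ε) ∧
    (volume Ω = ∞ → (∃ p : ℝ, 1 < p ∧ AInc p Ω φ) →
      ∀ f : RSp n → ℝ, MemOrlicz φ Ω f →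
        ∀ ε : ℝ≥0∞, 0 < ε → ∃ g : RSp n → ℝ, SmoothCompactSupp Ω g ∧
          (∫ x in Ω, g x) = 0 ∧ orliczNorm φ Ω (fun x => f x - g x) < ε) := by
  exact ⟨fun hvol f hf hfi hf0 ε hε => case_finite hΩ hφ ha0 hdec hvol hf hfi hf0 hε,
    fun hvol ⟨p, hp, hinc⟩ f hf ε hε => case_infinite hΩ hφ ha0 hdec hvol hp hinc hf hε⟩
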